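/- Let 𝕏 be a σ-finite measure space and T : ℳ → ℳ̃, S : 𝒩 → 𝒩̃ quotient operators between Banach L^0(𝕏)-modules. Then T ⊗_π S : ℳ ⊗̂_π 𝒩 → ℳ̃ ⊗̂_π 𝒩̃, the unique homomorphism with (T ⊗_π S)(v ⊗ w) = T(v) ⊗ S(w) for all v ∈ ℳ, w ∈ 𝒩, is a quotient operator. -/

import Mathlib

/-!
The contractions `|T v| ≤ |v|`, `|S w| ≤ |w|` and the density of the algebraic tensor product give
`|TS p| ≤ |p|` on all of `P` (`pn_le_of_dense`), so only lifting has to be controlled.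

The pointwise norms of the elements of a fibre of a linear map form a downward directed family, as
two preimages can be glued along a measurable set (`fibre_directed`). Hence the infimum defining a
quotient operator is the a.e. limit of the norms of a sequence of preimages
(`exists_seq_tendsto_of_isGLB`, `exists_seq_fibre`). Lifting both factors of every summand of a
representation `α' = ∑ vᵢ ⊗ wᵢ` along such sequences and passing to the a.e. limit shows that the
fibre of `TS` over `e' α'` has infimum norm `|α'|_π`.

The elements `e' α'` form a dense subgroup of `P'`. With the group norm `v ↦ ∫ min(|v|, 1)` the
modules are complete normed groups, and successive approximation
(`controlled_closure_of_complete`) extends the lifting to all of `P'`: an arbitrary `w` is written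
as `q + (w - q)` with `q` in the dense subgroup and `w - q` small, `q` is lifted almost optimally,
and `w - q` is lifted to something small (`isQuotientOp_of_dense`).
-/


open MeasureTheory Filter Set TensorProduct

noncomputable section

namespace Paper

variable {X : Type*} [MeasurableSpace X]

/-- The space `L⁰(𝕏)` of real-valued measurable functions up to `μ`-a.e. equality. -/
abbrev L0 (μ : Measure X) : Type _ := X →ₘ[μ] ℝ

instance (μ : Measure X) : CommRing (L0 μ) :=
  { (inferInstance : AddCommGroup (L0 μ)), (inferInstance : CommMonoid (L0 μ)) with
    left_distrib := fun a b c => AEEqFun.toGerm_injective <| by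
      simp only [AEEqFun.mul_toGerm, AEEqFun.add_toGerm, mul_add]
    right_distrib := fun a b c => AEEqFun.toGerm_injective <| by
      simp only [AEEqFun.mul_toGerm, AEEqFun.add_toGerm, add_mul]
    zero_mul := fun a => AEEqFun.toGerm_injective <| by
      simp only [AEEqFun.mul_toGerm, AEEqFun.zero_toGerm, zero_mul]
    mul_zero := fun a => AEEqFun.toGerm_injective <| by
      simp only [AEEqFun.mul_toGerm, AEEqFun.zero_toGerm, mul_zero] }

/-- The distance on `L⁰(𝕏)` inducing the topology of convergence in measure, defined through
the auxiliary finite measure `μ.toFinite` (which satisfies `μ ≪ μ.toFinite ≪ μ`). -/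
noncomputable def dL0 (μ : Measure X) [SFinite μ] (f g : L0 μ) : ℝ :=
  ∫ x, min |f x - g x| 1 ∂(μ.toFinite)

/-- A Banach `L⁰(𝕏)`-module: a module over `L⁰(𝕏)` endowed with a pointwise norm, complete
with respect to the induced distance. -/
class BanachMod (μ : Measure X) [SFinite μ] (M : Type*) [AddCommGroup M]
    [Module (L0 μ) M] where
  pn : M → L0 μ
  pn_nonneg : ∀ v : M, 0 ≤ pn v
  pn_eq_zero : ∀ v : M, pn v = 0 ↔ v = 0
  pn_add_le : ∀ v w : M, pn (v + w) ≤ pn v + pn w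
  pn_smul : ∀ (f : L0 μ) (v : M), pn (f • v) = |f| * pn v
  complete : ∀ u : ℕ → M,
    (∀ ε : ℝ, 0 < ε → ∃ N : ℕ, ∀ m ≥ N, ∀ n ≥ N, dL0 μ (pn (u m - u n)) 0 < ε) →
    ∃ v : M, Tendsto (fun n => dL0 μ (pn (u n - v)) 0) atTop (nhds 0)

/-- The pointwise norm of a Banach `L⁰(𝕏)`-module, with the measure explicit. -/
noncomputable def pn (μ : Measure X) [SFinite μ] {M : Type*} [AddCommGroup M]
    [Module (L0 μ) M] [BanachMod μ M] (v : M) : L0 μ :=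
  BanachMod.pn v

/-- The distance on a Banach `L⁰(𝕏)`-module. -/
noncomputable def dM (μ : Measure X) [SFinite μ] {M : Type*} [AddCommGroup M]
    [Module (L0 μ) M] [BanachMod μ M] (v w : M) : ℝ :=
  dL0 μ (pn μ (v - w)) 0

section Defs

variable (μ : Measure X) [SFinite μ]
variable {M N : Type*} [AddCommGroup M] [Module (L0 μ) M] [BanachMod μ M]
  [AddCommGroup N] [Module (L0 μ) N] [BanachMod μ N]

/-- The set of admissible bounds of a map between Banach `L⁰(𝕏)`-modules; the pointwise norm
`|T|` of a homomorphism is the infimum of this set. -/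
def homBddSet (T : M → N) : Set (L0 μ) :=
  {g | 0 ≤ g ∧ ∀ v, pn μ (T v) ≤ g * pn μ v}

/-- A homomorphism of Banach `L⁰(𝕏)`-modules: an `L⁰(𝕏)`-linear map admitting a bound
`g ∈ L⁰(𝕏)⁺` with `|T v| ≤ g |v|` (equivalently, `L⁰(𝕏)`-linear and continuous). -/
def IsHom (T : M →ₗ[L0 μ] N) : Prop :=
  ∃ g, g ∈ homBddSet μ (⇑T)

/-- The set of admissible bounds of an `L⁰(𝕏)`-valued map (for elements of the dual module). -/
def dualBddSet (ω : M → L0 μ) : Set (L0 μ) :=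
  {g | 0 ≤ g ∧ ∀ v, |ω v| ≤ g * pn μ v}

/-- Membership in the dual module `ℳ*`: an `L⁰(𝕏)`-linear map `ω : ℳ → L⁰(𝕏)` admitting a
bound `g ∈ L⁰(𝕏)⁺` with `|ω v| ≤ g |v|`. -/
def IsDual (ω : M →ₗ[L0 μ] L0 μ) : Prop :=
  ∃ g, g ∈ dualBddSet μ (⇑ω)

/-- Membership in the unit disc `𝔻_{ℳ*}` of the dual module: `|ω| ≤ 1`, equivalently
`|ω v| ≤ |v|` for every `v`. -/
def InDualDisc (ω : M →ₗ[L0 μ] L0 μ) : Prop :=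
  ∀ v, |ω v| ≤ pn μ v

/-- The family of pointwise norms `|s - ∑_{i ∈ F ∪ G} v i|` for `G` finite disjoint from `F`,
whose `F`-indexed inf-sup being `0` defines `s = ∑_{i∈I} v i`. -/
def sumUB {I : Type*} (v : I → M) (s : M) (F : Finset I) : Set (L0 μ) :=
  {g | ∃ G : Finset I, Disjoint G F ∧ g = pn μ (s - (∑ i ∈ F, v i + ∑ i ∈ G, v i))}

/-- `HasSumMod μ v s` means that the family `{v_i}` is summable in the Banach `L⁰(𝕏)`-module
with sum `s`, i.e. `⋀_F ⋁_G |s - ∑_{i ∈ F ∪ G} v_i| = 0` (the inner suprema being the values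
of `b`, and the outer infimum being `0`). -/
def HasSumMod {I : Type*} (v : I → M) (s : M) : Prop :=
  ∃ b : Finset I → L0 μ, (∀ F, IsLUB (sumUB μ v s F) (b F)) ∧ IsGLB (Set.range b) 0

/-- A family in a Banach `L⁰(𝕏)`-module is summable if it has a sum. -/
def SummableMod {I : Type*} (v : I → M) : Prop :=
  ∃ s, HasSumMod μ v s

/-- The partial sums `∑_{i ∈ F} |v i|` of the pointwise norms of a family; the element `|v|₁`
of `ℓ₁(I, ℳ)` is the supremum of this set. -/
def l1PartialSums {I : Type*} (v : I → M) : Set (L0 μ) :=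
  {g | ∃ F : Finset I, g = ∑ i ∈ F, pn μ (v i)}

/-- Membership in `ℓ₁(I, ℳ)`: the partial sums of the pointwise norms admit a supremum
(equivalently, an upper bound) in `L⁰(𝕏)`. -/
def Meml1 {I : Type*} (v : I → M) : Prop :=
  ∃ b, IsLUB (l1PartialSums μ v) b

/-- The partial sums `∑_{i ∈ F} |v i|` for an `L⁰(𝕏)`-valued family. -/
def l1PartialSumsF {I : Type*} (v : I → L0 μ) : Set (L0 μ) :=
  {g | ∃ F : Finset I, g = ∑ i ∈ F, |v i|}

/-- Membership in `ℓ₁(I, L⁰(𝕏))`. -/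
def Meml1F {I : Type*} (v : I → L0 μ) : Prop :=
  ∃ b, IsLUB (l1PartialSumsF μ v) b

/-- The set whose infimum defines the projective pointwise norm: all values
`∑_{i=1}^n |v_i||w_i|` over representations `α = ∑_{i=1}^n v_i ⊗ w_i`. -/
def piReps (α : M ⊗[L0 μ] N) : Set (L0 μ) :=
  {g | ∃ (n : ℕ) (v : Fin n → M) (w : Fin n → N),
    α = ∑ i, v i ⊗ₜ[L0 μ] w i ∧ g = ∑ i, pn μ (v i) * pn μ (w i)}

/-- The set whose supremum defines the injective pointwise norm: all values
`|∑_{i=1}^n ω(v_i) η(w_i)|` over representations `α = ∑_{i=1}^n v_i ⊗ w_i` and elements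
`ω ∈ 𝔻_{ℳ*}`, `η ∈ 𝔻_{𝒩*}`. -/
def epsReps (α : M ⊗[L0 μ] N) : Set (L0 μ) :=
  {g | ∃ (n : ℕ) (v : Fin n → M) (w : Fin n → N)
    (ω : M →ₗ[L0 μ] L0 μ) (η : N →ₗ[L0 μ] L0 μ), InDualDisc μ ω ∧ InDualDisc μ η ∧
    α = ∑ i, v i ⊗ₜ[L0 μ] w i ∧ g = |∑ i, ω (v i) * η (w i)|}

/-- `IsPiTensor μ M N P e` states that the Banach `L⁰(𝕏)`-module `P`, together with the
`L⁰(𝕏)`-linear map `e` defined on the algebraic tensor product, realizes the projective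
tensor product `ℳ ⊗̂_π 𝒩`: the pointwise norm of `e α` is the projective pointwise norm
`|α|_π` and the image of `e` is dense. -/
structure IsPiTensor (M N P : Type*) [AddCommGroup M] [Module (L0 μ) M] [BanachMod μ M]
    [AddCommGroup N] [Module (L0 μ) N] [BanachMod μ N]
    [AddCommGroup P] [Module (L0 μ) P] [BanachMod μ P]
    (e : M ⊗[L0 μ] N →ₗ[L0 μ] P) : Prop where
  pn_emb : ∀ α : M ⊗[L0 μ] N, IsGLB (piReps μ α) (pn μ (e α))
  dense : ∀ p : P, ∀ ε : ℝ, 0 < ε → ∃ α : M ⊗[L0 μ] N, dM μ (e α) p < ε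

/-- `IsEpsTensor μ M N P e` states that the Banach `L⁰(𝕏)`-module `P`, together with the
`L⁰(𝕏)`-linear map `e` defined on the algebraic tensor product, realizes the injective
tensor product `ℳ ⊗̂_ε 𝒩`: the pointwise norm of `e α` is the injective pointwise norm
`|α|_ε` and the image of `e` is dense. -/
structure IsEpsTensor (M N P : Type*) [AddCommGroup M] [Module (L0 μ) M] [BanachMod μ M]
    [AddCommGroup N] [Module (L0 μ) N] [BanachMod μ N]
    [AddCommGroup P] [Module (L0 μ) P] [BanachMod μ P]
    (e : M ⊗[L0 μ] N →ₗ[L0 μ] P) : Prop where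
  pn_emb : ∀ α : M ⊗[L0 μ] N, IsLUB (epsReps μ α) (pn μ (e α))
  dense : ∀ p : P, ∀ ε : ℝ, 0 < ε → ∃ α : M ⊗[L0 μ] N, dM μ (e α) p < ε

end Defs

/-- A quotient operator between Banach `L⁰(𝕏)`-modules: a surjective homomorphism `T` such
that `|w| = ⋀_{v ∈ T⁻¹(w)} |v|` for every `w`. -/
def IsQuotientOp (μ : Measure X) [SFinite μ] {M N : Type*} [AddCommGroup M] [Module (L0 μ) M]
    [BanachMod μ M] [AddCommGroup N] [Module (L0 μ) N] [BanachMod μ N]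
    (T : M →ₗ[L0 μ] N) : Prop :=
  IsHom μ T ∧ Function.Surjective T ∧
    ∀ w : N, IsGLB {g : L0 μ | ∃ v : M, T v = w ∧ g = pn μ v} (pn μ w)

/-! ### The functional `f ↦ ∫ min(|f|, 1)` on `L⁰` -/

section L0Lemmas

variable {μ : Measure X}

lemma le_iff_ae {f g : L0 μ} : f ≤ g ↔ ∀ᵐ x ∂μ, f x ≤ g x := AEEqFun.coeFn_le.symm

lemma coeFn_sum_L0 {ι : Type*} (s : Finset ι) (f : ι → L0 μ) :
    ∀ᵐ x ∂μ, (∑ i ∈ s, f i : L0 μ) x = ∑ i ∈ s, f i x := by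
  classical
  induction s using Finset.induction_on with
  | empty =>
    filter_upwards [AEEqFun.coeFn_zero (α := X) (β := ℝ) (μ := μ)] with x hx
    simpa using hx
  | insert a s ha ih =>
    rw [Finset.sum_insert ha]
    filter_upwards [ih, AEEqFun.coeFn_add (f a) (∑ i ∈ s, f i)] with x h1 h2
    rw [Finset.sum_insert ha, h2, Pi.add_apply, h1]

variable [SFinite μ]

lemma ae_finite_of_ae {p : X → Prop} (h : ∀ᵐ x ∂μ, p x) : ∀ᵐ x ∂μ.toFinite, p x := by
  rwa [ae_toFinite]

lemma aesm_toFinite (f : L0 μ) : AEStronglyMeasurable (fun x => f x) μ.toFinite :=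
  (AEEqFun.stronglyMeasurable f).aestronglyMeasurable

lemma dL0_zero_eq (f : L0 μ) : dL0 μ f 0 = ∫ x, min |f x| 1 ∂μ.toFinite := by
  refine integral_congr_ae (ae_finite_of_ae ?_)
  filter_upwards [AEEqFun.coeFn_zero (α := X) (β := ℝ) (μ := μ)] with x hx
  simp [hx]

lemma integrable_min (f : L0 μ) : Integrable (fun x => min |f x| 1) μ.toFinite := by
  refine Integrable.of_bound (C := 1) ?_ (ae_of_all _ fun x => ?_)
  · exact ((aesm_toFinite f).norm).inf aestronglyMeasurable_const
  · rw [Real.norm_eq_abs, abs_of_nonneg (le_min (abs_nonneg _) zero_le_one)]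
    exact min_le_right _ _

lemma dL0_nonneg (f : L0 μ) : 0 ≤ dL0 μ f 0 := by
  rw [dL0_zero_eq]
  exact integral_nonneg fun x => le_min (abs_nonneg _) zero_le_one

lemma dL0_le_add {f g k : L0 μ} (h : ∀ᵐ x ∂μ, |f x| ≤ |g x| + |k x|) :
    dL0 μ f 0 ≤ dL0 μ g 0 + dL0 μ k 0 := by
  simp only [dL0_zero_eq]
  rw [← integral_add (integrable_min g) (integrable_min k)]
  refine integral_mono_ae (integrable_min f) ((integrable_min g).add (integrable_min k))
    (ae_finite_of_ae ?_)
  filter_upwards [h] with x hx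
  have h1 := abs_nonneg (g x)
  have h2 := abs_nonneg (k x)
  rcases min_cases |f x| 1 with a | a <;> rcases min_cases |g x| 1 with b | b <;>
    rcases min_cases |k x| 1 with c | c <;> linarith

lemma dL0_mono {f g : L0 μ} (h : ∀ᵐ x ∂μ, |f x| ≤ |g x|) : dL0 μ f 0 ≤ dL0 μ g 0 := by
  simp only [dL0_zero_eq]
  refine integral_mono_ae (integrable_min f) (integrable_min g) (ae_finite_of_ae ?_)
  filter_upwards [h] with x hx
  exact min_le_min_right _ hx

lemma ae_zero_of_dL0_le_zero {f : L0 μ} (h : dL0 μ f 0 ≤ 0) : ∀ᵐ x ∂μ, f x = 0 := by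
  have h0 : dL0 μ f 0 = 0 := le_antisymm h (dL0_nonneg f)
  rw [dL0_zero_eq, integral_eq_zero_iff_of_nonneg
    (fun x => le_min (abs_nonneg _) zero_le_one) (integrable_min f), EventuallyEq,
    ae_toFinite] at h0
  filter_upwards [h0] with x hx
  by_contra hne
  have := lt_min (abs_pos.2 hne) (zero_lt_one (α := ℝ))
  simp only [Pi.zero_apply] at hx
  linarith

lemma dL0_zero_zero : dL0 μ (0 : L0 μ) 0 = 0 := by
  simp [dL0]

lemma eq_zero_of_dL0 {f : L0 μ} (h : dL0 μ f 0 = 0) : f = 0 := by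
  apply AEEqFun.ext
  filter_upwards [ae_zero_of_dL0_le_zero h.le, AEEqFun.coeFn_zero (α := X) (β := ℝ) (μ := μ)]
    with x hx h0
  rw [hx, h0]; rfl

/-- Dominated convergence: `f ↦ ∫ min(|f|, 1)` is continuous along a.e. convergent sequences. -/
lemma tendsto_dL0 {f : ℕ → L0 μ} {g : L0 μ}
    (h : ∀ᵐ x ∂μ, Tendsto (fun n => f n x) atTop (nhds (g x))) :
    Tendsto (fun n => dL0 μ (f n) 0) atTop (nhds (dL0 μ g 0)) := by
  simp only [dL0_zero_eq]
  refine tendsto_integral_of_dominated_convergence (fun _ => 1)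
    (fun n => (integrable_min (f n)).aestronglyMeasurable) (integrable_const _)
    (fun n => ae_of_all _ fun x => ?_) (ae_finite_of_ae ?_)
  · rw [Real.norm_eq_abs, abs_of_nonneg (le_min (abs_nonneg _) zero_le_one)]
    exact min_le_right _ _
  · filter_upwards [h] with x hx
    exact hx.abs.min tendsto_const_nhds

/-! ### Infima of downward directed families are limits of sequences -/

lemma integrable_arctan (f : L0 μ) : Integrable (fun x => Real.arctan (f x)) μ.toFinite := by
  refine Integrable.of_bound (C := Real.pi / 2) ?_ (ae_of_all _ fun x => ?_)
  · exact Real.continuous_arctan.comp_aestronglyMeasurable (aesm_toFinite f)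
  · rw [Real.norm_eq_abs, abs_le]
    exact ⟨(Real.neg_pi_div_two_lt_arctan _).le, (Real.arctan_lt_pi_div_two _).le⟩

lemma tendsto_integral_arctan {f : ℕ → L0 μ} {g : L0 μ}
    (h : ∀ᵐ x ∂μ, Tendsto (fun n => f n x) atTop (nhds (g x))) :
    Tendsto (fun n => ∫ x, Real.arctan (f n x) ∂μ.toFinite) atTop
      (nhds (∫ x, Real.arctan (g x) ∂μ.toFinite)) := by
  refine tendsto_integral_of_dominated_convergence (fun _ => Real.pi / 2)
    (fun n => (integrable_arctan (f n)).aestronglyMeasurable) (integrable_const _)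
    (fun n => ae_of_all _ fun x => ?_) (ae_finite_of_ae ?_)
  · rw [Real.norm_eq_abs, abs_le]
    exact ⟨(Real.neg_pi_div_two_lt_arctan _).le, (Real.arctan_lt_pi_div_two _).le⟩
  · filter_upwards [h] with x hx
    exact (Real.continuous_arctan.tendsto _).comp hx

lemma integral_arctan_mono {f g : L0 μ} (h : f ≤ g) :
    ∫ x, Real.arctan (f x) ∂μ.toFinite ≤ ∫ x, Real.arctan (g x) ∂μ.toFinite := by
  refine integral_mono_ae (integrable_arctan f) (integrable_arctan g) (ae_finite_of_ae ?_)
  filter_upwards [le_iff_ae.1 h] with x hx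
  exact Real.arctan_strictMono.monotone hx

/-- The infimum of a nonempty downward directed family in `L⁰` is the a.e. limit of a sequence of
members of the family. The sequence is decreasing and minimizes `∫ arctan(d)`, a bounded strictly
monotone functional; its limit must then lie below every member of the family. -/
lemma exists_seq_tendsto_of_isGLB {D : Set (L0 μ)} {g : L0 μ} (hne : D.Nonempty)
    (hdir : ∀ a ∈ D, ∀ b ∈ D, ∃ c ∈ D, c ≤ a ∧ c ≤ b) (hg : IsGLB D g) :
    ∃ d : ℕ → L0 μ, (∀ n, d n ∈ D) ∧
      ∀ᵐ x ∂μ, Tendsto (fun n => d n x) atTop (nhds (g x)) := by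
  set I : L0 μ → ℝ := fun f => ∫ x, Real.arctan (f x) ∂μ.toFinite with hI
  have hImono : ∀ {f g : L0 μ}, f ≤ g → I f ≤ I g := fun h => integral_arctan_mono h
  have hbdd : BddBelow (I '' D) := by
    refine ⟨I g, ?_⟩
    rintro _ ⟨d, hd, rfl⟩
    exact hImono (hg.1 hd)
  set c := sInf (I '' D) with hc
  have hcle : ∀ d ∈ D, c ≤ I d := fun d hd => csInf_le hbdd ⟨d, hd, rfl⟩
  have hf : ∀ n : ℕ, ∃ f ∈ D, I f < c + 1 / ((n : ℝ) + 1) := by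
    intro n
    have hpos : (0 : ℝ) < 1 / ((n : ℝ) + 1) := Nat.one_div_pos_of_nat
    obtain ⟨_, ⟨f, hfD, rfl⟩, hlt⟩ :=
      exists_lt_of_csInf_lt (hne.image I) (show sInf (I '' D) < c + 1 / ((n : ℝ) + 1) by
        rw [← hc]; linarith)
    exact ⟨f, hfD, hlt⟩
  choose f hfD hfI using hf
  choose m hmD hma hmb using hdir
  let d : ℕ → D := fun n => Nat.rec ⟨f 0, hfD 0⟩
    (fun n p => ⟨m p.1 p.2 (f (n + 1)) (hfD (n + 1)), hmD _ _ _ _⟩) n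
  have hsucc : ∀ n, (d (n + 1)).1 ≤ (d n).1 :=
    fun n => hma (d n).1 (d n).2 (f (n + 1)) (hfD (n + 1))
  have hdf : ∀ n, (d n).1 ≤ f n := by
    intro n
    cases n with
    | zero => exact le_rfl
    | succ n => exact hmb (d n).1 (d n).2 (f (n + 1)) (hfD (n + 1))
  have hanti : ∀ᵐ x ∂μ, Antitone fun n => (d n).1 x := by
    filter_upwards [ae_all_iff.2 fun n => le_iff_ae.1 (hsucc n)] with x hx
    exact antitone_nat_of_succ_le hx
  have hbelow : ∀ᵐ x ∂μ, ∀ n, g x ≤ (d n).1 x :=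
    ae_all_iff.2 fun n => le_iff_ae.1 (hg.1 (d n).2)
  have hlim : ∀ᵐ x ∂μ, Tendsto (fun n => (d n).1 x) atTop (nhds (⨅ n, (d n).1 x)) := by
    filter_upwards [hanti, hbelow] with x h1 h2
    exact tendsto_atTop_ciInf h1 ⟨g x, by rintro _ ⟨n, rfl⟩; exact h2 n⟩
  have hmeas : AEStronglyMeasurable (fun x => ⨅ n, (d n).1 x) μ :=
    aestronglyMeasurable_of_tendsto_ae atTop (fun n => (d n).1.aestronglyMeasurable) hlim
  set l : L0 μ := AEEqFun.mk _ hmeas with hl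
  have hlim' : ∀ᵐ x ∂μ, Tendsto (fun n => (d n).1 x) atTop (nhds (l x)) := by
    filter_upwards [hlim, AEEqFun.coeFn_mk _ hmeas] with x h1 h2
    rwa [hl, h2]
  have hgl : g ≤ l := by
    rw [le_iff_ae]
    filter_upwards [hlim', hbelow] with x h1 h2
    exact ge_of_tendsto' h1 h2
  have hIl : I l ≤ c := by
    refine le_of_tendsto_of_tendsto' (tendsto_integral_arctan hlim')
      (?_ : Tendsto (fun n : ℕ => c + 1 / ((n : ℝ) + 1)) atTop (nhds c))
      (fun n => (hImono (hdf n)).trans (hfI n).le)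
    simpa using tendsto_const_nhds.add (tendsto_one_div_add_atTop_nhds_zero_nat (𝕜 := ℝ))
  have hlb : l ∈ lowerBounds D := by
    intro a ha
    have h1 : c ≤ I (a ⊓ l) := by
      have ht : Tendsto (fun n => I (a ⊓ (d n).1)) atTop (nhds (I (a ⊓ l))) := by
        apply tendsto_integral_arctan
        filter_upwards [hlim', AEEqFun.coeFn_inf a l,
          ae_all_iff.2 fun n => AEEqFun.coeFn_inf a (d n).1] with x h1 h2 h3
        rw [h2]
        simp only [h3]
        exact tendsto_const_nhds.inf_nhds h1
      refine ge_of_tendsto' ht fun n => ?_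
      exact (hcle _ (hmD a ha _ (d n).2)).trans
        (hImono (le_inf (hma a ha _ (d n).2) (hmb a ha _ (d n).2)))
    have hle : ∀ᵐ x ∂μ.toFinite, Real.arctan ((a ⊓ l) x) ≤ Real.arctan (l x) := by
      apply ae_finite_of_ae
      filter_upwards [le_iff_ae.1 (inf_le_right : a ⊓ l ≤ l)] with x hx
      exact Real.arctan_strictMono.monotone hx
    have heq := (integral_eq_iff_of_ae_le (integrable_arctan (a ⊓ l)) (integrable_arctan l) hle).1
      (le_antisymm (hImono inf_le_right) (hIl.trans h1))
    rw [EventuallyEq, ae_toFinite] at heq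
    rw [le_iff_ae]
    filter_upwards [heq, AEEqFun.coeFn_inf a l] with x h2 h3
    have := Real.arctan_injective h2
    rw [← this, h3]
    exact inf_le_left
  have : l = g := le_antisymm (hg.2 hlb) hgl
  exact ⟨fun n => (d n).1, fun n => (d n).2, this ▸ hlim'⟩

end L0Lemmas

/-! ### Banach modules as normed groups, and directedness of fibres -/

section Modules

variable {μ : Measure X} [SFinite μ]
variable {M N : Type*} [AddCommGroup M] [Module (L0 μ) M] [BanachMod μ M]
  [AddCommGroup N] [Module (L0 μ) N] [BanachMod μ N]

lemma pn_nonneg_ae (v : M) : ∀ᵐ x ∂μ, 0 ≤ pn μ v x := by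
  filter_upwards [le_iff_ae.1 (BanachMod.pn_nonneg (μ := μ) v),
    AEEqFun.coeFn_zero (α := X) (β := ℝ) (μ := μ)] with x h1 h2
  rw [h2] at h1
  exact h1

lemma pn_add_ae (v w : M) : ∀ᵐ x ∂μ, pn μ (v + w) x ≤ pn μ v x + pn μ w x := by
  filter_upwards [le_iff_ae.1 (BanachMod.pn_add_le (μ := μ) v w),
    AEEqFun.coeFn_add (pn μ v) (pn μ w)] with x h1 h2
  rw [← Pi.add_apply, ← h2]
  exact h1

lemma pn_smul_ae (f : L0 μ) (v : M) : ∀ᵐ x ∂μ, pn μ (f • v) x = |f x| * pn μ v x := by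
  filter_upwards [AEEqFun.coeFn_mul |f| (pn μ v), AEEqFun.coeFn_abs f] with x h1 h2
  rw [show pn μ (f • v) = |f| * pn μ v from BanachMod.pn_smul f v, h1, Pi.mul_apply, h2]

lemma pn_neg_ae (v : M) : ∀ᵐ x ∂μ, pn μ (-v) x = pn μ v x := by
  filter_upwards [pn_smul_ae (-1 : L0 μ) v, AEEqFun.coeFn_neg (1 : L0 μ),
    AEEqFun.coeFn_one (α := X) (β := ℝ) (μ := μ)] with x h1 h2 h3
  rw [neg_one_smul] at h1
  rw [h1, h2, Pi.neg_apply, h3]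
  simp

lemma pn_sub_comm_ae (v w : M) : ∀ᵐ x ∂μ, pn μ (v - w) x = pn μ (w - v) x := by
  filter_upwards [pn_neg_ae (μ := μ) (w - v)] with x h
  rw [← h, neg_sub]

lemma pn_zero : pn μ (0 : M) = 0 := (BanachMod.pn_eq_zero (0 : M)).2 rfl

variable (μ M) in
/-- The group norm `v ↦ ∫ min(|v|, 1)` on a Banach `L⁰`-module. It is only subadditive, not
homogeneous, and induces the distance `dM`. -/
def modNorm : AddGroupNorm M where
  toFun v := dL0 μ (pn μ v) 0
  map_zero' := by rw [pn_zero, dL0_zero_zero]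
  add_le' v w := by
    apply dL0_le_add
    filter_upwards [pn_add_ae (μ := μ) v w, pn_nonneg_ae (μ := μ) (v + w),
      pn_nonneg_ae (μ := μ) v, pn_nonneg_ae (μ := μ) w] with x h h1 h2 h3
    rwa [abs_of_nonneg h1, abs_of_nonneg h2, abs_of_nonneg h3]
  neg' v := by
    apply le_antisymm <;> apply dL0_mono <;> filter_upwards [pn_neg_ae (μ := μ) v] with x h <;>
      rw [h]
  eq_zero_of_map_eq_zero' v h := (BanachMod.pn_eq_zero (μ := μ) v).1 (eq_zero_of_dL0 h)

variable (μ M) in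
/-- A Banach `L⁰`-module as a normed group, with the norm `modNorm`. -/
abbrev modNormed : NormedAddCommGroup M := (modNorm μ M).toNormedAddCommGroup

variable (μ M) in
lemma modNormed_complete : @CompleteSpace M (modNormed μ M).toPseudoMetricSpace.toUniformSpace := by
  let := modNormed μ M
  refine Metric.complete_of_cauchySeq_tendsto fun u hu => ?_
  obtain ⟨v, hv⟩ := BanachMod.complete (μ := μ) u (by
    intro ε hε
    obtain ⟨N, hN⟩ := Metric.cauchySeq_iff.1 hu ε hε
    refine ⟨N, fun m hm n hn => ?_⟩
    have := hN m hm n hn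
    rw [dist_eq_norm] at this
    exact this)
  refine ⟨v, tendsto_iff_norm_sub_tendsto_zero.2 hv⟩

/-- The fibre norms of a linear map form a downward directed set: two preimages are glued along the
set where the first one has the smaller pointwise norm. -/
lemma fibre_directed {N : Type*} [AddCommGroup N] [Module (L0 μ) N] (T : M →ₗ[L0 μ] N) (w : N) :
    ∀ a ∈ {g : L0 μ | ∃ v : M, T v = w ∧ g = pn μ v},
      ∀ b ∈ {g : L0 μ | ∃ v : M, T v = w ∧ g = pn μ v},
        ∃ c ∈ {g : L0 μ | ∃ v : M, T v = w ∧ g = pn μ v}, c ≤ a ∧ c ≤ b := by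
  rintro _ ⟨v₁, h₁, rfl⟩ _ ⟨v₂, h₂, rfl⟩
  have hA : MeasurableSet {x | pn μ v₁ x ≤ pn μ v₂ x} :=
    measurableSet_le (AEEqFun.measurable _) (AEEqFun.measurable _)
  have hm : AEStronglyMeasurable ({x | pn μ v₁ x ≤ pn μ v₂ x}.indicator fun _ => (1 : ℝ)) μ :=
    (stronglyMeasurable_const.indicator hA).aestronglyMeasurable
  set χ : L0 μ := AEEqFun.mk _ hm with hχ
  have key : ∀ᵐ x ∂μ, pn μ (χ • v₁ + (1 - χ) • v₂) x ≤ min (pn μ v₁ x) (pn μ v₂ x) := by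
    filter_upwards [pn_add_ae (χ • v₁) ((1 - χ) • v₂), pn_smul_ae χ v₁, pn_smul_ae (1 - χ) v₂,
      AEEqFun.coeFn_mk _ hm, AEEqFun.coeFn_sub (1 : L0 μ) χ,
      AEEqFun.coeFn_one (α := X) (β := ℝ) (μ := μ)] with x e1 e2 e3 e4 e5 e6
    rw [e2, e3, e5, Pi.sub_apply, e6, hχ, e4] at e1
    refine e1.trans ?_
    by_cases hx : pn μ v₁ x ≤ pn μ v₂ x
    · simp [indicator, hx]
    · simp [indicator, hx, le_of_not_ge hx]
  refine ⟨_, ⟨χ • v₁ + (1 - χ) • v₂, ?_, rfl⟩, ?_, ?_⟩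
  · rw [map_add, map_smul, map_smul, h₁, h₂, ← add_smul]
    simp
  · rw [le_iff_ae]
    filter_upwards [key] with x hx using hx.trans (min_le_left _ _)
  · rw [le_iff_ae]
    filter_upwards [key] with x hx using hx.trans (min_le_right _ _)

lemma exists_seq_fibre (T : M →ₗ[L0 μ] N) (w : N) (hw : ∃ v, T v = w)
    (h : IsGLB {g : L0 μ | ∃ v : M, T v = w ∧ g = pn μ v} (pn μ w)) :
    ∃ v : ℕ → M, (∀ n, T (v n) = w) ∧
      ∀ᵐ x ∂μ, Tendsto (fun n => pn μ (v n) x) atTop (nhds (pn μ w x)) := by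
  obtain ⟨v, hv⟩ := hw
  have hne : {g : L0 μ | ∃ v : M, T v = w ∧ g = pn μ v}.Nonempty := ⟨pn μ v, v, hv, rfl⟩
  obtain ⟨d, hd, hlim⟩ := exists_seq_tendsto_of_isGLB hne (fibre_directed T w) h
  choose u hu hdu using hd
  refine ⟨u, hu, ?_⟩
  simpa only [hdu] using hlim

/-! ### Extending the quotient property from a dense subgroup -/

/-- A pointwise contraction whose fibres over a dense subgroup `K` have the right infimum norms is
a quotient operator. Over `K`, elements lift with norm control by any constant `C > 1`; successive
approximation in the complete domain extends this to the closure of `K`. -/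
lemma isQuotientOp_of_dense (T : M →ₗ[L0 μ] N) (hcontr : ∀ v, pn μ (T v) ≤ pn μ v)
    (K : AddSubgroup N) (hK : ∀ w : N, ∀ ε : ℝ, 0 < ε → ∃ q ∈ K, dM μ q w < ε)
    (hsurj : ∀ q ∈ K, ∃ v, T v = q)
    (hglb : ∀ q ∈ K, IsGLB {g : L0 μ | ∃ v : M, T v = q ∧ g = pn μ v} (pn μ q)) :
    IsQuotientOp μ T := by
  let iM := modNormed μ M
  let iN := modNormed μ N
  have : CompleteSpace M := modNormed_complete μ M
  have hcontr' : ∀ v, ‖T v‖ ≤ 1 * ‖v‖ := by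
    intro v
    rw [one_mul]
    refine dL0_mono ?_
    filter_upwards [le_iff_ae.1 (hcontr v), pn_nonneg_ae (μ := μ) v,
      pn_nonneg_ae (μ := μ) (T v)] with x h1 h2 h3
    rwa [abs_of_nonneg h2, abs_of_nonneg h3]
  let f : NormedAddGroupHom M N := AddMonoidHom.mkNormedAddGroupHom T.toAddMonoidHom 1 hcontr'
  have hf : ∀ v, f v = T v := fun _ => rfl
  have honK : f.SurjectiveOnWith K 2 := by
    intro q hq
    by_cases hq0 : q = 0
    · exact ⟨0, by simp [hq0], by simp [hq0]⟩
    obtain ⟨v, hv, hlim⟩ := exists_seq_fibre T q (hsurj q hq) (hglb q hq)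
    have ht : Tendsto (fun n => ‖v n‖) atTop (nhds ‖q‖) := tendsto_dL0 hlim
    have hpos : ‖q‖ < 2 * ‖q‖ := by
      have := norm_pos_iff.2 hq0
      linarith
    obtain ⟨n, hn⟩ := (ht.eventually_lt_const hpos).exists
    exact ⟨v n, hv n, hn.le⟩
  have hclos : ∀ w, w ∈ K.topologicalClosure := by
    intro w
    refine Metric.mem_closure_iff.2 fun ε hε => ?_
    obtain ⟨q, hq, hqw⟩ := hK w ε hε
    refine ⟨q, hq, ?_⟩
    rw [dist_comm, dist_eq_norm]
    exact hqw
  have hlift : ∀ w, ∃ v, T v = w ∧ ‖v‖ ≤ 3 * ‖w‖ := by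
    intro w
    obtain ⟨v, hv, hvn⟩ :=
      controlled_closure_of_complete (ε := 1) two_pos one_pos honK w (hclos w)
    exact ⟨v, hv, hvn.trans_eq (by norm_num)⟩
  refine ⟨⟨1, ?_, fun v => by rw [one_mul]; exact hcontr v⟩,
    fun w => (hlift w).imp fun v h => h.1, fun w => ⟨?_, fun h hh => ?_⟩⟩
  · rw [le_iff_ae]
    filter_upwards [AEEqFun.coeFn_zero (α := X) (β := ℝ) (μ := μ),
      AEEqFun.coeFn_one (α := X) (β := ℝ) (μ := μ)] with x h0 h1
    rw [h0, h1]
    exact zero_le_one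
  · rintro _ ⟨v, rfl, rfl⟩
    exact hcontr v
  · -- Lift `w = q + (w - q)` with `q ∈ K` close to `w`: `h` is below the norm of every such lift.
    have hpos : ∀ ε : ℝ, 0 < ε → dL0 μ ((h - pn μ w) ⊔ 0) 0 ≤ 4 * ε := by
      intro ε hε
      obtain ⟨q, hq, hqw⟩ := hK w ε hε
      obtain ⟨t, ht, htn⟩ := hlift (w - q)
      have hqw' : ‖w - q‖ < ε := by rw [norm_sub_rev]; exact hqw
      obtain ⟨v, hv, hlim⟩ := exists_seq_fibre T q (hsurj q hq) (hglb q hq)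
      have hlim0 : ∀ᵐ x ∂μ, h x ≤ pn μ q x + pn μ t x := by
        have hb : ∀ n, h ≤ pn μ (v n + t) := fun n =>
          hh ⟨v n + t, by rw [map_add, hv n, ht]; abel, rfl⟩
        filter_upwards [hlim, ae_all_iff.2 fun n => le_iff_ae.1 (hb n),
          ae_all_iff.2 fun n => pn_add_ae (μ := μ) (v n) t] with x h1 h2 h3
        exact ge_of_tendsto' (h1.add_const _) fun n => (h2 n).trans (h3 n)
      have : dL0 μ ((h - pn μ w) ⊔ 0) 0 ≤ dL0 μ (pn μ t) 0 + dL0 μ (pn μ (w - q)) 0 := by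
        apply dL0_le_add
        filter_upwards [hlim0, pn_add_ae (μ := μ) (q - w) w, pn_sub_comm_ae (μ := μ) q w,
          pn_nonneg_ae (μ := μ) t, pn_nonneg_ae (μ := μ) (w - q),
          AEEqFun.coeFn_sup (h - pn μ w) 0, AEEqFun.coeFn_sub h (pn μ w),
          AEEqFun.coeFn_zero (α := X) (β := ℝ) (μ := μ)] with x h1 h2 h3 h4 h5 h6 h7 h8
        rw [sub_add_cancel] at h2
        rw [h6, h7, h8, abs_of_nonneg h4, abs_of_nonneg h5, Pi.sub_apply, Pi.zero_apply,
          abs_of_nonneg le_sup_right]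
        exact sup_le (by linarith) (by linarith)
      have h1 : dL0 μ (pn μ t) 0 = ‖t‖ := rfl
      have h2 : dL0 μ (pn μ (w - q)) 0 = ‖w - q‖ := rfl
      linarith
    have hz := ae_zero_of_dL0_le_zero (le_of_forall_pos_le_add (fun ε hε => by
      have := hpos (ε / 4) (by positivity)
      linarith) : dL0 μ ((h - pn μ w) ⊔ 0) 0 ≤ 0)
    rw [le_iff_ae]
    filter_upwards [hz, AEEqFun.coeFn_sup (h - pn μ w) 0, AEEqFun.coeFn_sub h (pn μ w)]
      with x h1 h2 h3
    rw [h2, h3, Pi.sub_apply] at h1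
    have := le_sup_left.trans_eq h1
    linarith

end Modules

/-! ### Contractivity and the tensor product -/

section Tensor

lemma coeFn_sum_mul {μ : Measure X} {n : ℕ} (f g : Fin n → L0 μ) :
    ∀ᵐ x ∂μ, (∑ i, f i * g i : L0 μ) x = ∑ i, f i x * g i x := by
  filter_upwards [coeFn_sum_L0 Finset.univ fun i => f i * g i,
    ae_all_iff.2 fun i => AEEqFun.coeFn_mul (f i) (g i)] with x h1 h2
  rw [h1]
  exact Finset.sum_congr rfl fun i _ => h2 i

variable {μ : Measure X} [SFinite μ]
variable {M N : Type*} [AddCommGroup M] [Module (L0 μ) M] [BanachMod μ M]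
  [AddCommGroup N] [Module (L0 μ) N] [BanachMod μ N]

/-- A homomorphism that is pointwise contractive on a dense set is pointwise contractive. If `g`
is a bound of `T`, the excess `(|T v| - |v|)⁺ / (1 + g)` is dominated by `|a - v|` for every `a`
in the dense set. -/
lemma pn_le_of_dense {A : Type*} (T : M →ₗ[L0 μ] N) (hT : IsHom μ T) (e : A → M)
    (hd : ∀ v : M, ∀ ε : ℝ, 0 < ε → ∃ a : A, dM μ (e a) v < ε)
    (he : ∀ a, pn μ (T (e a)) ≤ pn μ (e a)) (v : M) : pn μ (T v) ≤ pn μ v := by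
  obtain ⟨g, hg0, hg⟩ := hT
  have hm : AEStronglyMeasurable
      (fun x => max (pn μ (T v) x - pn μ v x) 0 / (1 + g x)) μ := by
    refine AEMeasurable.aestronglyMeasurable (Measurable.aemeasurable ?_)
    exact (((AEEqFun.measurable _).sub (AEEqFun.measurable _)).max measurable_const).div
      ((AEEqFun.measurable g).const_add 1)
  have hg0' : ∀ᵐ x ∂μ, 0 ≤ g x := by
    filter_upwards [le_iff_ae.1 hg0, AEEqFun.coeFn_zero (α := X) (β := ℝ) (μ := μ)] with x h1 h2
    rw [h2] at h1
    exact h1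
  have hle : dL0 μ (AEEqFun.mk _ hm) 0 ≤ 0 := by
    refine le_of_forall_pos_le_add fun ε hε => ?_
    obtain ⟨a, ha⟩ := hd v ε hε
    rw [zero_add]
    refine (dL0_mono ?_).trans (le_of_lt ha)
    filter_upwards [AEEqFun.coeFn_mk _ hm, hg0', le_iff_ae.1 (he a),
      le_iff_ae.1 (hg (e a - v)), AEEqFun.coeFn_mul g (pn μ (e a - v)),
      pn_add_ae (μ := μ) (T v - T (e a)) (T (e a)), pn_add_ae (μ := μ) (e a - v) v,
      pn_sub_comm_ae (μ := μ) (T v) (T (e a)),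
      pn_nonneg_ae (μ := μ) (e a - v)] with x h1 h2 h3 h4 h5 h6 h7 h8 h9
    rw [sub_add_cancel] at h6 h7
    rw [h5, map_sub, Pi.mul_apply] at h4
    have hpos : 0 < 1 + g x := by linarith
    rw [h1, abs_of_nonneg h9, abs_of_nonneg (div_nonneg (le_max_right _ _) hpos.le),
      div_le_iff₀ hpos]
    exact max_le (by linarith) (mul_nonneg h9 hpos.le)
  rw [le_iff_ae]
  filter_upwards [ae_zero_of_dL0_le_zero hle, AEEqFun.coeFn_mk _ hm, hg0'] with x h1 h2 h3
  rw [h2, div_eq_zero_iff] at h1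
  rcases h1 with h1 | h1
  · have := (le_max_left _ _).trans_eq h1
    linarith
  · linarith

end Tensor

/-- Let `T : ℳ → ℳ'` and `S : 𝒩 → 𝒩'` be quotient operators between
Banach `L⁰(𝕏)`-modules. Then `T ⊗_π S : ℳ ⊗̂_π 𝒩 → ℳ' ⊗̂_π 𝒩'`, the unique homomorphism
with `(T ⊗_π S)(v ⊗ w) = T v ⊗ S w`, is a quotient operator. -/
theorem projective_tensor_of_quotient_ops
    (μ : Measure X) [SigmaFinite μ]
    (M : Type*) [AddCommGroup M] [Module (L0 μ) M] [BanachMod μ M]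
    (N : Type*) [AddCommGroup N] [Module (L0 μ) N] [BanachMod μ N]
    (M' : Type*) [AddCommGroup M'] [Module (L0 μ) M'] [BanachMod μ M']
    (N' : Type*) [AddCommGroup N'] [Module (L0 μ) N'] [BanachMod μ N']
    (P : Type*) [AddCommGroup P] [Module (L0 μ) P] [BanachMod μ P]
    (P' : Type*) [AddCommGroup P'] [Module (L0 μ) P'] [BanachMod μ P']
    (e : M ⊗[L0 μ] N →ₗ[L0 μ] P) (hP : IsPiTensor μ M N P e)
    (e' : M' ⊗[L0 μ] N' →ₗ[L0 μ] P') (hP' : IsPiTensor μ M' N' P' e')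
    (T : M →ₗ[L0 μ] M') (S : N →ₗ[L0 μ] N')
    (hT : IsQuotientOp μ T) (hS : IsQuotientOp μ S)
    (TS : P →ₗ[L0 μ] P') (hTS : IsHom μ TS)
    (hTSe : ∀ (v : M) (w : N), TS (e (v ⊗ₜ[L0 μ] w)) = e' (T v ⊗ₜ[L0 μ] S w)) :
    IsQuotientOp μ TS := by
  have hcomp : ∀ α : M ⊗[L0 μ] N, TS (e α) = e' (TensorProduct.map T S α) := by
    intro α
    induction α using TensorProduct.induction_on with
    | zero => simp
    | tmul v w => rw [hTSe, TensorProduct.map_tmul]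
    | add a b ha hb => simp only [map_add, ha, hb]
  have hTc : ∀ v, pn μ (T v) ≤ pn μ v := fun v => (hT.2.2 (T v)).1 ⟨v, rfl, rfl⟩
  have hSc : ∀ w, pn μ (S w) ≤ pn μ w := fun w => (hS.2.2 (S w)).1 ⟨w, rfl, rfl⟩
  have hcontr : ∀ p, pn μ (TS p) ≤ pn μ p := by
    refine pn_le_of_dense TS hTS e hP.dense fun α => ?_
    -- `|(T ⊗ S) α|_π ≤ ∑ |T vᵢ| |S wᵢ| ≤ ∑ |vᵢ| |wᵢ|` for every representation of `α`.
    refine (hP.pn_emb α).2 ?_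
    rintro _ ⟨n, v, w, rfl, rfl⟩
    have h1 : pn μ (TS (e (∑ i, v i ⊗ₜ[L0 μ] w i))) ≤ ∑ i, pn μ (T (v i)) * pn μ (S (w i)) := by
      rw [hcomp]
      exact (hP'.pn_emb _).1 ⟨n, fun i => T (v i), fun i => S (w i), by simp, rfl⟩
    refine h1.trans ?_
    rw [le_iff_ae]
    filter_upwards [coeFn_sum_mul (μ := μ) (fun i => pn μ (T (v i))) (fun i => pn μ (S (w i))),
      coeFn_sum_mul (μ := μ) (fun i => pn μ (v i)) (fun i => pn μ (w i)),
      ae_all_iff.2 fun i => le_iff_ae.1 (hTc (v i)),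
      ae_all_iff.2 fun i => le_iff_ae.1 (hSc (w i)),
      ae_all_iff.2 fun i => pn_nonneg_ae (μ := μ) (v i),
      ae_all_iff.2 fun i => pn_nonneg_ae (μ := μ) (S (w i))] with x e1 e2 e3 e4 e5 e6
    rw [e1, e2]
    exact Finset.sum_le_sum fun i _ => mul_le_mul (e3 i) (e4 i) (e6 i) (e5 i)
  refine isQuotientOp_of_dense TS hcontr (LinearMap.range e').toAddSubgroup
    (fun w ε hε => ?_) ?_ ?_
  · obtain ⟨α, hα⟩ := hP'.dense w ε hε
    exact ⟨e' α, ⟨α, rfl⟩, hα⟩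
  · rintro _ ⟨α', rfl⟩
    obtain ⟨α, rfl⟩ := TensorProduct.map_surjective hT.2.1 hS.2.1 α'
    exact ⟨e α, hcomp α⟩
  · rintro _ ⟨α', rfl⟩
    refine ⟨?_, fun h hh => (hP'.pn_emb α').2 ?_⟩
    · rintro _ ⟨p, hp, rfl⟩
      rw [← hp]
      exact hcontr p
    · -- Lifting the factors of a representation of `α'` along sequences whose norms converge
      -- a.e. bounds `h` by the corresponding sum.
      rintro _ ⟨n, v, w, rfl, rfl⟩
      choose a haT halim using fun i => exists_seq_fibre T (v i) (hT.2.1 _) (hT.2.2 (v i))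
      choose b hbS hblim using fun i => exists_seq_fibre S (w i) (hS.2.1 _) (hS.2.2 (w i))
      have hk : ∀ k, h ≤ ∑ i, pn μ (a i k) * pn μ (b i k) := by
        intro k
        refine (hh ⟨e (∑ i, a i k ⊗ₜ[L0 μ] b i k), ?_, rfl⟩).trans
          ((hP.pn_emb _).1 ⟨n, fun i => a i k, fun i => b i k, rfl, rfl⟩)
        rw [hcomp]
        simp [haT, hbS]
      rw [le_iff_ae]
      filter_upwards [ae_all_iff.2 fun k => le_iff_ae.1 (hk k), ae_all_iff.2 halim,
        ae_all_iff.2 hblim, coeFn_sum_mul (μ := μ) (fun i => pn μ (v i)) (fun i => pn μ (w i)),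
        ae_all_iff.2 fun k => coeFn_sum_mul (μ := μ) (fun i => pn μ (a i k))
          (fun i => pn μ (b i k))] with x e1 e2 e3 e4 e5
      rw [e4]
      refine ge_of_tendsto' (tendsto_finsetSum _ fun i _ => (e2 i).mul (e3 i)) fun k => ?_
      rw [← e5 k]
      exact e1 k

end Paper
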